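/- Normalization inequality for positive operators: let A and B be nonzero positive semidefinite complex matrices of the same size, with traces a := Tr A > 0 and b := Tr B > 0. Then ‖ A/a − B/b ‖₁ ≤ (2 / min(a,b)) · ‖A − B‖₁. -/

import Mathlib

open Matrix BigOperators
open scoped ComplexOrder MatrixOrder

noncomputable section

/-- The trace norm of a complex matrix: `Tr √(MᴴM)` (sum of singular values). -/
noncomputable def traceNorm {m n : Type*} [Fintype m] [Fintype n] [DecidableEq n]
    (M : Matrix m n ℂ) : ℝ :=
  ((CFC.sqrt (Mᴴ * M)).trace).re

/-- Kronecker (tensor) product of a finite family of `D × D` matrices. -/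
noncomputable def kron {D : ℕ} {ι : Type*} [Fintype ι]
    (μs : ι → Matrix (Fin D) (Fin D) ℂ) :
    Matrix (ι → Fin D) (ι → Fin D) ℂ :=
  fun x y => ∏ m, μs m (x m) (y m)

/-- A `δ`-injective virtual superoperator in Kraus form. -/
def IsKrausDeltaInjective {ι : Type*} [Fintype ι] [DecidableEq ι] (D : ℕ) (δ : ℝ)
    (Φ : Matrix ι ι ℂ →ₗ[ℂ] Matrix (Fin D) (Fin D) ℂ) : Prop :=
  ∃ (k : ℕ) (c : Fin k → ℝ) (K : Fin k → Matrix (Fin D) ι ℂ),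
    (∀ a, δ ^ 2 ≤ c a ∧ c a ≤ 1) ∧
    (∑ a, (K a)ᴴ * K a) = (D : ℂ) • (1 : Matrix ι ι ℂ) ∧
    (∀ X, Φ X = ∑ a, (c a : ℂ) • (K a * X * (K a)ᴴ))

lemma traceNorm_eq_sum {n : Type*} [Fintype n] [DecidableEq n] (H : Matrix n n ℂ)
    (hH : H.IsHermitian) : traceNorm H = ∑ i, |hH.eigenvalues i| := by
  have h1 : CFC.sqrt (Hᴴ * H) = cfc (fun x : ℝ => ‖x‖) H :=
    CFC.abs_eq_cfc_norm H hH.isSelfAdjoint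
  unfold traceNorm
  rw [h1, hH.cfc_eq, IsHermitian.cfc, Unitary.conjStarAlgAut_apply, trace_mul_comm, ← mul_assoc]
  simp [trace_diagonal]

lemma traceNorm_sub_le {n : Type*} [Fintype n] [DecidableEq n] (P Q : Matrix n n ℂ)
    (hP : P.PosSemidef) (hQ : Q.PosSemidef) :
    traceNorm (P - Q) ≤ P.trace.re + Q.trace.re := by
  have hH : (P - Q).IsHermitian := hP.1.sub hQ.1
  rw [traceNorm_eq_sum _ hH]
  set U : Matrix n n ℂ := (↑(hH.eigenvectorUnitary) : Matrix n n ℂ) with hU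
  have hUU : U * Uᴴ = 1 := Unitary.coe_mul_star_self hH.eigenvectorUnitary
  have key : Uᴴ * (P - Q) * U = diagonal (RCLike.ofReal ∘ hH.eigenvalues) := by
    have := hH.conjStarAlgAut_star_eigenvectorUnitary
    rw [Unitary.conjStarAlgAut_apply] at this
    simpa [star_eq_conjTranspose] using this
  have tr : ∀ M : Matrix n n ℂ, M.trace.re = ∑ i, ((Uᴴ * M * U) i i).re := by
    intro M
    have : (Uᴴ * M * U).trace = M.trace := by
      rw [trace_mul_comm, ← mul_assoc, hUU, one_mul]
    rw [← this, trace, Complex.re_sum]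
    rfl
  rw [tr P, tr Q, ← Finset.sum_add_distrib]
  refine Finset.sum_le_sum fun i _ => ?_
  have hp := (Complex.nonneg_iff.mp ((hP.conjTranspose_mul_mul_same U).diag_nonneg (i := i))).1
  have hq := (Complex.nonneg_iff.mp ((hQ.conjTranspose_mul_mul_same U).diag_nonneg (i := i))).1
  have hk := congrArg (fun M : Matrix n n ℂ => (M i i).re) key
  simp [mul_sub, sub_mul] at hk
  rw [← hk, abs_le]
  constructor <;> linarith

/-- Normalization inequality for positive operators. -/
theorem normalization_inequality
    {n : Type*} [Fintype n] [DecidableEq n]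
    (A B : Matrix n n ℂ) (hA : A.PosSemidef) (hB : B.PosSemidef)
    (hA0 : A ≠ 0) (hB0 : B ≠ 0)
    (a b : ℝ) (ha' : a = A.trace.re) (hb' : b = B.trace.re)
    (ha : 0 < a) (hb : 0 < b) :
    traceNorm (((a : ℂ))⁻¹ • A - ((b : ℂ))⁻¹ • B)
      ≤ (2 / min a b) * traceNorm (A - B) := by
  have hH : (A - B).IsHermitian := hA.1.sub hB.1
  have hp : (A - B)⁺.PosSemidef := Matrix.nonneg_iff_posSemidef.mp (CFC.posPart_nonneg _)
  have hq : (A - B)⁻.PosSemidef := Matrix.nonneg_iff_posSemidef.mp (CFC.negPart_nonneg _)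
  have hs : (A - B)⁺ - (A - B)⁻ = A - B := CFC.posPart_sub_negPart _ hH.isSelfAdjoint
  have hadd : (A - B)⁺ + (A - B)⁻ = CFC.sqrt ((A - B)ᴴ * (A - B)) :=
    CFC.posPart_add_negPart _ hH.isSelfAdjoint
  have ht : traceNorm (A - B) = ((A - B)⁺).trace.re + ((A - B)⁻).trace.re := by
    unfold traceNorm
    rw [← hadd]; simp
  have hd : a - b = ((A - B)⁺).trace.re - ((A - B)⁻).trace.re := by
    have := congrArg (fun M : Matrix n n ℂ => M.trace.re) hs
    simp at this
    rw [ha', hb']; linarith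
  have hp0 := (Complex.nonneg_iff.mp hp.trace_nonneg).1
  have hq0 := (Complex.nonneg_iff.mp hq.trace_nonneg).1
  rw [ht]
  generalize (A - B)⁺ = P at *
  generalize (A - B)⁻ = Q at *
  have hA' : A = P - Q + B := by rw [hs]; simp
  have hac : (a : ℂ) ≠ 0 := by exact_mod_cast ha.ne'
  have hbc : (b : ℂ) ≠ 0 := by exact_mod_cast hb.ne'
  have hai : (0 : ℂ) ≤ (a : ℂ)⁻¹ := by
    rw [← Complex.ofReal_inv]; exact_mod_cast (inv_pos.mpr ha).le
  have fin : a⁻¹ * (2 * (P.trace.re + Q.trace.re))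
      ≤ 2 / min a b * (P.trace.re + Q.trace.re) := by
    have : a⁻¹ ≤ (min a b)⁻¹ := inv_anti₀ (lt_min ha hb) (min_le_left _ _)
    rw [div_eq_mul_inv]
    nlinarith [add_nonneg hp0 hq0]
  refine le_trans ?_ fin
  rcases le_total a b with hab | hab
  · have hc : (0 : ℂ) ≤ (((b - a) / (a * b) : ℝ) : ℂ) := by
      exact_mod_cast div_nonneg (sub_nonneg.mpr hab) (mul_pos ha hb).le
    have e : ((a : ℂ))⁻¹ • A - ((b : ℂ))⁻¹ • B
        = ((a : ℂ)⁻¹ • P + (((b - a) / (a * b) : ℝ) : ℂ) • B) - (a : ℂ)⁻¹ • Q := by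
      rw [hA']
      have : (((b - a) / (a * b) : ℝ) : ℂ) = (a : ℂ)⁻¹ - (b : ℂ)⁻¹ := by
        push_cast; field_simp
      rw [this]
      module
    rw [e]
    refine (traceNorm_sub_le _ _ ((hp.smul hai).add (hB.smul hc)) (hq.smul hai)).trans ?_
    simp only [trace_add, trace_smul, smul_eq_mul, Complex.add_re, ← Complex.ofReal_inv,
      Complex.re_ofReal_mul, ← hb']
    have : (b - a) / (a * b) * b = a⁻¹ * (b - a) := by field_simp
    rw [this]
    have := inv_pos.mpr ha
    nlinarith
  · have hc : (0 : ℂ) ≤ (((a - b) / (a * b) : ℝ) : ℂ) := by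
      exact_mod_cast div_nonneg (sub_nonneg.mpr hab) (mul_pos ha hb).le
    have e : ((a : ℂ))⁻¹ • A - ((b : ℂ))⁻¹ • B
        = (a : ℂ)⁻¹ • P - ((a : ℂ)⁻¹ • Q + (((a - b) / (a * b) : ℝ) : ℂ) • B) := by
      rw [hA']
      have : (((a - b) / (a * b) : ℝ) : ℂ) = (b : ℂ)⁻¹ - (a : ℂ)⁻¹ := by
        push_cast; field_simp
      rw [this]
      module
    rw [e]
    refine (traceNorm_sub_le _ _ (hp.smul hai) ((hq.smul hai).add (hB.smul hc))).trans ?_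
    simp only [trace_add, trace_smul, smul_eq_mul, Complex.add_re, ← Complex.ofReal_inv,
      Complex.re_ofReal_mul, ← hb']
    have : (a - b) / (a * b) * b = a⁻¹ * (a - b) := by field_simp
    rw [this]
    have := inv_pos.mpr ha
    nlinarith

end
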